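/- For all 1 ≤ j,k ≤ q, the fourth Wirtinger derivative of ψ in the z-variables satisfies ∂^4ψ/∂z̄_j∂z_j∂z̄_k∂z_k(0,0) = Σ_{t=q+1}^n [2i/(|λ_t|+|λ_j|+|λ_k|)^2 · (|λ_t|+|λ_j|+|λ_k| − |λ_j||λ_k|/(|λ_k|+|λ_t|) − |λ_j||λ_k|/(|λ_j|+|λ_t|))] |∂^3φ/∂z̄_t∂z_j∂z_k(0)|^2 − i ∂^4φ/∂z̄_j∂z_j∂z̄_k∂z_k(0), where all derivatives of ψ are taken in the z-variables (w held fixed) and evaluated at (z,w) = (0,0). -/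

import Mathlib

open Complex Asymptotics

attribute [local instance] Classical.propDecidable

noncomputable section

/-- `ℂⁿ` as `Fin n → ℂ`. -/
abbrev Cn (n : ℕ) := Fin n → ℂ

/-- Wirtinger derivative `∂/∂z_j = (1/2)(∂/∂x_{2j-1} − i ∂/∂x_{2j})`. -/
def wd {n : ℕ} (j : Fin n) (f : Cn n → ℂ) : Cn n → ℂ := fun z =>
  (1 / 2 : ℂ) *
    (fderiv ℝ f z (Pi.single j 1) - Complex.I * fderiv ℝ f z (Pi.single j Complex.I))

/-- Wirtinger derivative `∂/∂z̄_j = (1/2)(∂/∂x_{2j-1} + i ∂/∂x_{2j})`. -/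
def wdb {n : ℕ} (j : Fin n) (f : Cn n → ℂ) : Cn n → ℂ := fun z =>
  (1 / 2 : ℂ) *
    (fderiv ℝ f z (Pi.single j 1) + Complex.I * fderiv ℝ f z (Pi.single j Complex.I))

/-- A real-valued function regarded as complex-valued. -/
def cplx {n : ℕ} (φ : Cn n → ℝ) : Cn n → ℂ := fun z => (φ z : ℂ)

/-- `φ` is smooth and `φ(z) = Σ_j λ_j |z_j|² + O(|z|³)` as `z → 0`. -/
def PhiOK {n : ℕ} (lam : Fin n → ℝ) (φ : Cn n → ℝ) : Prop :=
  ContDiff ℝ (⊤ : ℕ∞) φ ∧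
    (fun z : Cn n => φ z - ∑ j, lam j * Complex.normSq (z j)) =O[nhds 0] fun z => ‖z‖ ^ 3

/-- The conditions (a)–(e) on the phase function `ψ`. -/
def Admissible {n : ℕ} (lam : Fin n → ℝ) (φ : Cn n → ℝ) (ψ : Cn n → Cn n → ℂ) : Prop :=
  ContDiff ℝ (⊤ : ℕ∞) (fun p : Cn n × Cn n => ψ p.1 p.2) ∧
  -- (a)
  (∀ z, ψ z z = 0) ∧
  (∀ z w, ψ z w = - (starRingEnd ℂ) (ψ w z)) ∧
  -- (b)
  (∃ c : ℝ, 0 < c ∧ ∀ z w, c * ‖z - w‖ ^ 2 ≤ (ψ z w).im) ∧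
  -- (c): on the diagonal, ∂ψ/∂z̄_j = i ∂φ/∂z̄_j, ∂ψ/∂z_j = −i ∂φ/∂z_j,
  --      ∂ψ/∂w̄_j = −i ∂φ/∂z̄_j, ∂ψ/∂w_j = i ∂φ/∂z_j
  (∀ (z : Cn n) (j : Fin n), wdb j (fun x => ψ x z) z = Complex.I * wdb j (cplx φ) z) ∧
  (∀ (z : Cn n) (j : Fin n), wd j (fun x => ψ x z) z = - Complex.I * wd j (cplx φ) z) ∧
  (∀ (z : Cn n) (j : Fin n), wdb j (fun w => ψ z w) z = - Complex.I * wdb j (cplx φ) z) ∧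
  (∀ (z : Cn n) (j : Fin n), wd j (fun w => ψ z w) z = Complex.I * wd j (cplx φ) z) ∧
  -- (d): Σ_j (i ∂ψ/∂z̄_j + ∂φ/∂z̄_j)(−i ∂ψ/∂z_j + ∂φ/∂z_j) vanishes to infinite
  --      order on the diagonal
  (∀ (m : ℕ) (z : Cn n),
    iteratedFDeriv ℝ m
      (fun p : Cn n × Cn n =>
        ∑ j, (Complex.I * wdb j (fun x => ψ x p.2) p.1 + wdb j (cplx φ) p.1) *
             (- Complex.I * wd j (fun x => ψ x p.2) p.1 + wd j (cplx φ) p.1))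
      (z, z) = 0) ∧
  -- (e)
  ((fun p : Cn n × Cn n =>
      ψ p.1 p.2 -
        (Complex.I * ∑ j, ((|lam j| * Complex.normSq (p.1 j - p.2 j) : ℝ) : ℂ)
          + Complex.I * ∑ j, ((lam j : ℝ) : ℂ) *
              ((starRingEnd ℂ) (p.1 j) * p.2 j - (starRingEnd ℂ) (p.2 j) * p.1 j)))
    =O[nhds 0] fun p => ‖p‖ ^ 3)
section abstractPart
variable {R V : Type*} [CommRing R] [Algebra ℂ R] {n : ℕ}

/-- abstract symbol condition -/
def GoodDir (D : V → Derivation ℂ R R) (ev : R →ₐ[ℂ] ℂ) (A B : Fin n → R) (h φ : R)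
    (v : V) (e ε : ℝ) : Prop :=
  ∀ T : R →ₗ[ℂ] R, ∑ t, (ev (D v (A t)) * ev (T (B t)) + ev (T (A t)) * ev (D v (B t)))
    = 2 * (e : ℂ) * (ev (T (D v h)) - (ε : ℂ) * ev (T (D v φ)))

theorem GoodDir.two {D : V → Derivation ℂ R R} {ev : R →ₐ[ℂ] ℂ} {A B : Fin n → R} {h φ : R}
    {v : V} {e ε : ℝ} (g : GoodDir D ev A B h φ v e ε) (u u' : V) :
    ∑ t, (ev (D v (A t)) * ev (D u (D u' (B t))) + ev (D u (D u' (A t))) * ev (D v (B t)))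
    = 2 * (e : ℂ) * (ev (D u (D u' (D v h))) - (ε : ℂ) * ev (D u (D u' (D v φ)))) :=
  g ((D u).toLinearMap.comp (D u').toLinearMap)

theorem GoodDir.three {D : V → Derivation ℂ R R} {ev : R →ₐ[ℂ] ℂ} {A B : Fin n → R} {h φ : R}
    {v : V} {e ε : ℝ} (g : GoodDir D ev A B h φ v e ε) (u u' u'' : V) :
    ∑ t, (ev (D v (A t)) * ev (D u (D u' (D u'' (B t))))
      + ev (D u (D u' (D u'' (A t)))) * ev (D v (B t)))
    = 2 * (e : ℂ) * (ev (D u (D u' (D u'' (D v h)))) - (ε : ℂ) * ev (D u (D u' (D u'' (D v φ))))) :=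
  g ((D u).toLinearMap.comp ((D u').toLinearMap.comp (D u'').toLinearMap))

theorem third_order (D : V → Derivation ℂ R R) (ev : R →ₐ[ℂ] ℂ) (A B : Fin n → R) (h φ : R)
    (hc : ∀ u v f, D u (D v f) = D v (D u f))
    (hA : ∀ t, ev (A t) = 0) (hB : ∀ t, ev (B t) = 0)
    {v1 v2 v3 : V} {e1 e2 e3 ε1 ε2 ε3 : ℝ}
    (hE : ev (D v1 (D v2 (D v3 (∑ t, A t * B t)))) = 0)
    (g1 : GoodDir D ev A B h φ v1 e1 ε1)
    (g2 : GoodDir D ev A B h φ v2 e2 ε2)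
    (g3 : GoodDir D ev A B h φ v3 e3 ε3) :
    ((e1 : ℂ) + e2 + e3) * ev (D v1 (D v2 (D v3 h))) =
      ((ε1 : ℂ) * e1 + ε2 * e2 + ε3 * e3) * ev (D v1 (D v2 (D v3 φ))) := by
  have k1 := g1.two v2 v3
  have k2 := g2.two v1 v3
  have k3 := g3.two v1 v2
  rw [hc v3 v1 h, hc v2 v1, hc v3 v1 φ, hc v2 v1] at k1
  rw [hc v3 v2 h, hc v3 v2 φ] at k2
  have key : ev (D v1 (D v2 (D v3 (∑ t, A t * B t)))) =
      ∑ t, (ev (D v1 (A t)) * ev (D v2 (D v3 (B t))) + ev (D v2 (D v3 (A t))) * ev (D v1 (B t)))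
      + ∑ t, (ev (D v2 (A t)) * ev (D v1 (D v3 (B t))) + ev (D v1 (D v3 (A t))) * ev (D v2 (B t)))
      + ∑ t, (ev (D v3 (A t)) * ev (D v1 (D v2 (B t))) + ev (D v1 (D v2 (A t))) * ev (D v3 (B t))) := by
    rw [← Finset.sum_add_distrib, ← Finset.sum_add_distrib]
    simp only [map_sum, Derivation.leibniz, map_add, map_mul, smul_eq_mul, hA, hB]
    refine Finset.sum_congr rfl fun t _ => ?_
    ring
  rw [key, k1, k2, k3] at hE
  linear_combination (1/2 : ℂ) * hE

theorem fourth_order (D : V → Derivation ℂ R R) (ev : R →ₐ[ℂ] ℂ) (A B : Fin n → R) 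
    (hA : ∀ t, ev (A t) = 0) (hB : ∀ t, ev (B t) = 0)
    (v1 v2 v3 v4 : V)
    (hE : ev (D v1 (D v2 (D v3 (D v4 (∑ t, A t * B t))))) = 0) :
     ∑ t, (ev (D v1 (A t)) * ev (D v2 (D v3 (D v4 (B t)))) + ev (D v2 (D v3 (D v4 (A t)))) * ev (D v1 (B t)))
     + ∑ t, (ev (D v2 (A t)) * ev (D v1 (D v3 (D v4 (B t)))) + ev (D v1 (D v3 (D v4 (A t)))) * ev (D v2 (B t)))
     + ∑ t, (ev (D v3 (A t)) * ev (D v1 (D v2 (D v4 (B t)))) + ev (D v1 (D v2 (D v4 (A t)))) * ev (D v3 (B t)))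
     + ∑ t, (ev (D v4 (A t)) * ev (D v1 (D v2 (D v3 (B t)))) + ev (D v1 (D v2 (D v3 (A t)))) * ev (D v4 (B t)))
     + ∑ t, (ev (D v1 (D v2 (A t))) * ev (D v3 (D v4 (B t))) + ev (D v3 (D v4 (A t))) * ev (D v1 (D v2 (B t)))
         + ev (D v1 (D v3 (A t))) * ev (D v2 (D v4 (B t))) + ev (D v2 (D v4 (A t))) * ev (D v1 (D v3 (B t)))
         + ev (D v1 (D v4 (A t))) * ev (D v2 (D v3 (B t))) + ev (D v2 (D v3 (A t))) * ev (D v1 (D v4 (B t)))) = 0 := by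
  rw [← hE]
  simp only [← Finset.sum_add_distrib]
  simp only [map_sum, Derivation.leibniz, map_add, map_mul, smul_eq_mul, hA, hB]
  refine Finset.sum_congr rfl fun t _ => ?_
  ring


theorem abstract_main (D : V → Derivation ℂ R R) (ev : R →ₐ[ℂ] ℂ) (A B : Fin n → R) (h φ : R)
    (hc : ∀ u v f, D u (D v f) = D v (D u f))
    (hA : ∀ t, ev (A t) = 0) (hB : ∀ t, ev (B t) = 0)
    (z zb wz wzb qz qzb : Fin n → V)
    (hAdef : ∀ t, A t = D (zb t) (h + φ)) (hBdef : ∀ t, B t = D (z t) (φ - h))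
    (q : ℕ) (lam : Fin n → ℝ)
    (hneg : ∀ j : Fin n, (j : ℕ) < q → lam j < 0)
    (hpos : ∀ j : Fin n, q ≤ (j : ℕ) → 0 < lam j)
    (hE3 : ∀ v1 v2 v3, ev (D v1 (D v2 (D v3 (∑ t, A t * B t)))) = 0)
    (hE4 : ∀ v1 v2 v3 v4, ev (D v1 (D v2 (D v3 (D v4 (∑ t, A t * B t))))) = 0)
    (hzA : ∀ s t, ev (D (z s) (A t)) = if t = s then ((lam s - |lam s| : ℝ) : ℂ) else 0)
    (hzB : ∀ s t, ev (D (z s) (B t)) = 0)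
    (hzbA : ∀ s t, ev (D (zb s) (A t)) = 0)
    (hzbB : ∀ s t, ev (D (zb s) (B t)) = if t = s then ((lam s + |lam s| : ℝ) : ℂ) else 0)
    (hqA : ∀ s t, ev (D (qz s) (A t)) = 0) (hqB : ∀ s t, ev (D (qz s) (B t)) = 0)
    (hqbA : ∀ s t, ev (D (qzb s) (A t)) = 0) (hqbB : ∀ s t, ev (D (qzb s) (B t)) = 0)
    (hq : ∀ s f, D (qz s) f = D (z s) f + D (wz s) f)
    (hqb : ∀ s f, D (qzb s) f = D (zb s) f + D (wzb s) f)
    (hwφ : ∀ s, D (wz s) φ = 0) (hwbφ : ∀ s, D (wzb s) φ = 0)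
    (j k : Fin n) (hj : (j : ℕ) < q) (hk : (k : ℕ) < q)
    (h0 : ∀ t, ev (D (qzb t) (D (qz j) (D (qz k) h))) = 0)
    (hherm : ∀ t, ev (D (wzb t) (D (wz j) (D (wz k) h)))
      = (starRingEnd ℂ) (ev (D (z t) (D (zb j) (D (zb k) h)))))
    (hφc : ∀ t, ev (D (z t) (D (zb j) (D (zb k) φ)))
      = (starRingEnd ℂ) (ev (D (zb t) (D (z j) (D (z k) φ))))) :
    ev (D (zb j) (D (z j) (D (zb k) (D (z k) h)))) =
      ev (D (zb j) (D (z j) (D (zb k) (D (z k) φ)))) -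
      ∑ t : Fin n, if q ≤ (t : ℕ) then
        ((2 / (|lam t| + |lam j| + |lam k|) ^ 2 *
            (|lam t| + |lam j| + |lam k|
              - |lam j| * |lam k| / (|lam k| + |lam t|)
              - |lam j| * |lam k| / (|lam j| + |lam t|)) : ℝ) : ℂ) *
          (Complex.normSq (ev (D (zb t) (D (z j) (D (z k) φ)))) : ℂ)
      else 0 := by
  have gz1 : ∀ s : Fin n, (s : ℕ) < q → GoodDir D ev A B h φ (z s) |lam s| 1 := by
    intro s hs T
    simp only [hzA, hzB, mul_zero, add_zero, ite_mul, zero_mul, Finset.sum_ite_eq',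
      Finset.mem_univ, if_true]
    rw [abs_of_neg (hneg s hs), hBdef, map_sub, map_sub, map_sub]
    push_cast; ring
  have gz2 : ∀ s : Fin n, q ≤ (s : ℕ) → ∀ ε, GoodDir D ev A B h φ (z s) 0 ε := by
    intro s hs ε T
    simp only [hzA, hzB, mul_zero, add_zero, ite_mul, zero_mul, Finset.sum_ite_eq',
      Finset.mem_univ, if_true]
    rw [abs_of_pos (hpos s hs)]
    push_cast; ring
  have gb1 : ∀ s : Fin n, (s : ℕ) < q → ∀ ε, GoodDir D ev A B h φ (zb s) 0 ε := by
    intro s hs ε T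
    simp only [hzbA, hzbB, mul_zero, zero_add, mul_ite, zero_mul, Finset.sum_ite_eq',
      Finset.mem_univ, if_true]
    rw [abs_of_neg (hneg s hs)]
    push_cast; ring
  have gb2 : ∀ s : Fin n, q ≤ (s : ℕ) → GoodDir D ev A B h φ (zb s) |lam s| (-1) := by
    intro s hs T
    simp only [hzbA, hzbB, mul_zero, zero_add, mul_ite, zero_mul, Finset.sum_ite_eq',
      Finset.mem_univ, if_true]
    rw [abs_of_pos (hpos s hs), hAdef, map_add, map_add, map_add]
    push_cast; ring
  have gq : ∀ s ε, GoodDir D ev A B h φ (qz s) 0 ε := by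
    intro s ε T
    simp [hqA, hqB]
  have gqb : ∀ s ε, GoodDir D ev A B h φ (qzb s) 0 ε := by
    intro s ε T
    simp [hqbA, hqbB]
  have T3 := fun {v1 v2 v3 : V} {e1 e2 e3 ε1 ε2 ε3 : ℝ} =>
    third_order (v1 := v1) (v2 := v2) (v3 := v3) (e1 := e1) (e2 := e2) (e3 := e3) (ε1 := ε1)
      (ε2 := ε2) (ε3 := ε3) D ev A B h φ hc hA hB (hE3 _ _ _)
  have hjp : 0 < |lam j| := abs_pos.2 (hneg j hj).ne
  have hkp : 0 < |lam k| := abs_pos.2 (hneg k hk).ne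
  -- vanishing of second derivatives of B
  have Bz : ∀ (t : Fin n) (u v : V) (e e' : ℝ), 0 ≤ e → 0 ≤ e' →
      GoodDir D ev A B h φ u e 1 → GoodDir D ev A B h φ v e' 1 →
      ((t : ℕ) < q ∨ 0 < e ∨ 0 < e') → ev (D u (D v (B t))) = 0 := by
    intro t u v e e' he he' gu gv hor
    have : ∃ e0 : ℝ, 0 ≤ e0 ∧ ((t : ℕ) < q → 0 < e0) ∧ GoodDir D ev A B h φ (z t) e0 1 := by
      by_cases ht : (t : ℕ) < q
      · exact ⟨|lam t|, abs_nonneg _, fun _ => abs_pos.2 (hneg t ht).ne, gz1 t ht⟩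
      · exact ⟨0, le_rfl, fun h => absurd h ht, gz2 t (not_lt.1 ht) 1⟩
    obtain ⟨e0, h1, h2, g0⟩ := this
    have h3 := T3 gu gv g0
    have hs : 0 < e + e' + e0 := by
      rcases hor with h | h | h
      · have := h2 h; positivity
      · positivity
      · positivity
    have hs' : ((e : ℂ) + e' + e0) ≠ 0 := by exact_mod_cast hs.ne'
    rw [hBdef, map_sub, map_sub, map_sub, map_sub, sub_eq_zero]
    apply mul_left_cancel₀ hs'
    rw [h3]; push_cast; ring
  have F := fourth_order D ev A B hA hB (zb j) (z j) (zb k) (z k) (hE4 _ _ _ _)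
  rw [(gb1 j hj 1).three, (gz1 j hj).three, (gb1 k hk 1).three, (gz1 k hk).three] at F
  have e1 : ∀ f, D (zb j) (D (zb k) (D (z k) (D (z j) f))) =
      D (zb j) (D (z j) (D (zb k) (D (z k) f))) := by
    intro f
    rw [hc (z k) (z j), hc (zb k) (z j)]
  rw [e1, e1] at F
  have hb : ∀ t : Fin n, (t : ℕ) < q ∨ q ≤ (t : ℕ) := fun t => lt_or_ge _ _
  have S : ∀ t : Fin n, (ev (D (zb j) (D (z j) (A t))) * ev (D (zb k) (D (z k) (B t)))
         + ev (D (zb k) (D (z k) (A t))) * ev (D (zb j) (D (z j) (B t)))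
         + ev (D (zb j) (D (zb k) (A t))) * ev (D (z j) (D (z k) (B t)))
         + ev (D (z j) (D (z k) (A t))) * ev (D (zb j) (D (zb k) (B t)))
         + ev (D (zb j) (D (z k) (A t))) * ev (D (z j) (D (zb k) (B t)))
         + ev (D (z j) (D (zb k) (A t))) * ev (D (zb j) (D (z k) (B t)))) =
      2 * (((|lam j| : ℝ) : ℂ) + ((|lam k| : ℝ) : ℂ)) * (if q ≤ (t : ℕ) then
        ((2 / (|lam t| + |lam j| + |lam k|) ^ 2 *
            (|lam t| + |lam j| + |lam k|
              - |lam j| * |lam k| / (|lam k| + |lam t|)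
              - |lam j| * |lam k| / (|lam j| + |lam t|)) : ℝ) : ℂ) *
          (Complex.normSq (ev (D (zb t) (D (z j) (D (z k) φ)))) : ℂ)
      else 0) := by
    intro t
    rw [Bz t (zb k) (z k) 0 _ le_rfl hkp.le (gb1 k hk 1) (gz1 k hk) (by tauto),
      Bz t (zb j) (z j) 0 _ le_rfl hjp.le (gb1 j hj 1) (gz1 j hj) (by tauto),
      Bz t (z j) (z k) _ _ hjp.le hkp.le (gz1 j hj) (gz1 k hk) (by tauto),
      Bz t (z j) (zb k) _ 0 hjp.le le_rfl (gz1 j hj) (gb1 k hk 1) (by tauto),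
      Bz t (zb j) (z k) 0 _ le_rfl hkp.le (gb1 j hj 1) (gz1 k hk) (by tauto)]
    rcases hb t with ht | ht
    · rw [Bz t (zb j) (zb k) 0 0 le_rfl le_rfl (gb1 j hj 1) (gb1 k hk 1) (by tauto),
        if_neg (not_le.2 ht)]
      ring
    · rw [if_pos ht]
      have htp : 0 < |lam t| := abs_pos.2 (hpos t ht).ne'
      have cφ : ∀ (a : Fin n) f, D (wz a) (D f φ) = 0 := by
        intro a f; rw [hc, hwφ, map_zero]
      have cbφ : ∀ (a : Fin n) f, D (wzb a) (D f φ) = 0 := by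
        intro a f; rw [hc, hwbφ, map_zero]
      have cφ' : ∀ (a : Fin n) f g, D (wz a) (D g (D f φ)) = 0 := by
        intro a f g; rw [hc, cφ, map_zero]
      have cbφ' : ∀ (a : Fin n) f g, D (wzb a) (D g (D f φ)) = 0 := by
        intro a f g; rw [hc, cbφ, map_zero]
      set α := ev (D (zb t) (D (z j) (D (z k) φ))) with hα
      have x100 := T3 (gb2 t ht) (gq j 1) (gq k 1)
      have x010 := T3 (gqb t 1) (gz1 j hj) (gq k 1)
      have x001 := T3 (gqb t 1) (gq j 1) (gz1 k hk)
      have x110 := T3 (gb2 t ht) (gz1 j hj) (gq k 1)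
      have x101 := T3 (gb2 t ht) (gq j 1) (gz1 k hk)
      have x011 := T3 (gqb t 1) (gz1 j hj) (gz1 k hk)
      have x111 := T3 (gb2 t ht) (gz1 j hj) (gz1 k hk)
      have x000 := h0 t
      have hw := hherm t
      simp only [hq, hqb, hwφ, hwbφ, map_add, map_zero, add_zero, cφ, cbφ, cφ', cbφ', ← hα] at x100 x010 x001 x110 x101 x011 x111 x000
      have hBt : ev (D (zb j) (D (zb k) (B t))) = (starRingEnd ℂ) α -
          ev (D (z t) (D (zb j) (D (zb k) h))) := by
        rw [hBdef, map_sub, map_sub, map_sub, map_sub, ← hφc, hc (zb k) (z t), hc (zb j) (z t),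
          hc (zb k) (z t), hc (zb j) (z t)]
      have hAt : ev (D (z j) (D (z k) (A t))) = α +
          ev (D (zb t) (D (z j) (D (z k) h))) := by
        rw [hAdef, map_add, map_add, map_add, map_add, hα, hc (z k) (zb t), hc (z j) (zb t),
          hc (z k) (zb t), hc (z j) (zb t)]
        ring
      have hx : ev (D (z t) (D (zb j) (D (zb k) h))) =
        (starRingEnd ℂ) (ev (D (wzb t) (D (wz j) (D (wz k) h)))) := by rw [hw, Complex.conj_conj]
      rw [hBt, hAt, hx]
      have n1 : ((|lam t| : ℝ) : ℂ) ≠ 0 := by exact_mod_cast htp.ne'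
      have n2 : ((|lam j| : ℝ) : ℂ) ≠ 0 := by exact_mod_cast hjp.ne'
      have n3 : ((|lam k| : ℝ) : ℂ) ≠ 0 := by exact_mod_cast hkp.ne'
      have n4 : ((|lam t| : ℝ) : ℂ) + ((|lam j| : ℝ) : ℂ) ≠ 0 := by exact_mod_cast (add_pos htp hjp).ne'
      have n5 : ((|lam t| : ℝ) : ℂ) + ((|lam k| : ℝ) : ℂ) ≠ 0 := by exact_mod_cast (add_pos htp hkp).ne'
      have n6 : ((|lam j| : ℝ) : ℂ) + ((|lam k| : ℝ) : ℂ) ≠ 0 := by exact_mod_cast (add_pos hjp hkp).ne'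
      have n7 : ((|lam t| : ℝ) : ℂ) + ((|lam j| : ℝ) : ℂ) + ((|lam k| : ℝ) : ℂ) ≠ 0 := by
        exact_mod_cast (add_pos (add_pos htp hjp) hkp).ne'
      have hW : ev (D (wzb t) (D (wz j) (D (wz k) h))) =
          (((|lam j| - |lam t|) / (|lam t| + |lam j|) + (|lam k| - |lam t|) / (|lam t| + |lam k|)
           - (|lam j| + |lam k| - |lam t|) / (|lam t| + |lam j| + |lam k|) : ℝ) : ℂ) * α := by
        push_cast at x100 x010 x001 x110 x101 x011 x111 ⊢
        generalize ((|lam t| : ℝ) : ℂ) = a at *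
        generalize ((|lam j| : ℝ) : ℂ) = b at *
        generalize ((|lam k| : ℝ) : ℂ) = c at *
        linear_combination (norm := skip) x000 - x100 / a - x010 / b - x001 / c
          + x110 / (a + b) + x101 / (a + c) + x011 / (b + c) - x111 / (a + b + c)
        have r1 : b + a ≠ 0 := by rwa [add_comm]
        simp only [zero_add, add_zero]
        field_simp
        ring
      have hX : ev (D (zb t) (D (z j) (D (z k) h))) =
          (((|lam j| + |lam k| - |lam t|) / (|lam t| + |lam j| + |lam k|) : ℝ) : ℂ) * α := by
        push_cast at x111 ⊢
        rw [div_mul_eq_mul_div, eq_div_iff n7]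
        linear_combination x111
      rw [hW, hX, map_mul, Complex.conj_ofReal, Complex.normSq_eq_conj_mul_self]
      push_cast
      have r1 : ((|lam k| : ℝ) : ℂ) + ((|lam t| : ℝ) : ℂ) ≠ 0 := by rwa [add_comm]
      have r2 : ((|lam j| : ℝ) : ℂ) + ((|lam t| : ℝ) : ℂ) ≠ 0 := by rwa [add_comm]
      generalize ((|lam t| : ℝ) : ℂ) = a at *
      generalize ((|lam j| : ℝ) : ℂ) = b at *
      generalize ((|lam k| : ℝ) : ℂ) = c at *
      generalize (starRingEnd ℂ) α = α' at *
      clear_value α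
      clear * - n1 n2 n3 n4 n5 n6 n7 r1 r2
      field_simp
      ring
  rw [Finset.sum_congr rfl (fun t _ => S t), ← Finset.mul_sum] at F
  have n6 : (((|lam j| : ℝ) : ℂ) + ((|lam k| : ℝ) : ℂ)) ≠ 0 := by exact_mod_cast (add_pos hjp hkp).ne'
  have n6' : 2 * (((|lam j| : ℝ) : ℂ) + ((|lam k| : ℝ) : ℂ)) ≠ 0 := mul_ne_zero two_ne_zero n6
  apply mul_left_cancel₀ n6'
  rw [Complex.ofReal_zero, Complex.ofReal_one] at F
  linear_combination F

end abstractPart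

section concretePart
variable {n : ℕ}

/-- smooth functions on `ℂⁿ × ℂⁿ` -/
def SmAlg (n : ℕ) : Subalgebra ℂ (Cn n × Cn n → ℂ) where
  carrier := {f | ContDiff ℝ (⊤ : ℕ∞) f}
  mul_mem' := fun {a b} (ha : ContDiff ℝ _ a) (hb : ContDiff ℝ _ b) =>
    (ContDiff.mul ha hb : ContDiff ℝ (⊤ : ℕ∞) fun x => a x * b x)
  add_mem' := fun {a b} (ha : ContDiff ℝ _ a) (hb : ContDiff ℝ _ b) =>
    (ContDiff.add ha hb : ContDiff ℝ (⊤ : ℕ∞) fun x => a x + b x)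
  algebraMap_mem' := fun c => (contDiff_const : ContDiff ℝ (⊤ : ℕ∞) (fun _ : Cn n × Cn n => c))

theorem Sm_smooth (f : SmAlg n) : ContDiff ℝ (⊤ : ℕ∞) f.1 := f.2

theorem Sm_diff (f : SmAlg n) (p) : DifferentiableAt ℝ f.1 p :=
  ((Sm_smooth f).differentiable (by simp)) p

/-- directional derivative -/
def Dir (v : Cn n × Cn n) : Derivation ℂ (SmAlg n) (SmAlg n) :=
  Derivation.mk'
    { toFun := fun f => ⟨fun p => fderiv ℝ f.1 p v,
        ((Sm_smooth f).fderiv_right (m := (⊤ : ℕ∞)) (by simp)).clm_apply contDiff_const⟩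
      map_add' := by
        intro f g
        ext p
        change fderiv ℝ (f.1 + g.1) p v = _
        rw [fderiv_add (Sm_diff f p) (Sm_diff g p)]
        rfl
      map_smul' := by
        intro c f
        ext p
        change fderiv ℝ (c • f.1) p v = _
        rw [fderiv_const_smul (Sm_diff f p)]
        rfl }
    (by
      intro f g
      ext p
      change fderiv ℝ (f.1 * g.1) p v = f.1 p * fderiv ℝ g.1 p v + g.1 p * fderiv ℝ f.1 p v
      rw [fderiv_mul (Sm_diff f p) (Sm_diff g p)]
      rfl)

theorem Dir_apply (v : Cn n × Cn n) (f : SmAlg n) (p) : (Dir v f).1 p = fderiv ℝ f.1 p v := rfl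

theorem two_le_sm : (2 : WithTop ℕ∞) ≤ ((⊤ : ℕ∞) : WithTop ℕ∞) := by
  have : ((2 : ℕ∞) : WithTop ℕ∞) ≤ ((⊤ : ℕ∞) : WithTop ℕ∞) := by exact_mod_cast le_top
  exact this

theorem Dir_comm (u v : Cn n × Cn n) (f : SmAlg n) : Dir u (Dir v f) = Dir v (Dir u f) := by
  have h2 : ∀ (a b : Cn n × Cn n) p, (Dir a (Dir b f)).1 p = fderiv ℝ (fderiv ℝ f.1) p a b := by
    intro a b p
    change fderiv ℝ (fun p => fderiv ℝ f.1 p b) p a = _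
    have hd : DifferentiableAt ℝ (fderiv ℝ f.1) p :=
      (((Sm_smooth f).fderiv_right (m := (⊤ : ℕ∞)) (by simp)).differentiable (by simp)) p
    rw [fderiv_clm_apply hd (differentiableAt_const _)]
    simp
  ext p
  rw [h2, h2]
  have := ((Sm_smooth f).contDiffAt (x := p)).isSymmSndFDerivAt (by simpa using two_le_sm)
  exact this u v

theorem Dir_add (u v : Cn n × Cn n) (f : SmAlg n) : Dir (u + v) f = Dir u f + Dir v f := by
  ext p; simp [Dir_apply]

theorem Dir_neg (u : Cn n × Cn n) (f : SmAlg n) : Dir (-u) f = - Dir u f := by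
  ext p; simp [Dir_apply]

/-- complexified directional derivative -/
def DC (v : (Cn n × Cn n) × (Cn n × Cn n)) : Derivation ℂ (SmAlg n) (SmAlg n) :=
  (1 / 2 : ℂ) • (Dir v.1 + Complex.I • Dir v.2)

theorem DC_eq (v : (Cn n × Cn n) × (Cn n × Cn n)) (f : SmAlg n) :
    DC v f = (1 / 2 : ℂ) • (Dir v.1 f + Complex.I • Dir v.2 f) := rfl

theorem DC_apply (v : (Cn n × Cn n) × (Cn n × Cn n)) (f : SmAlg n) (p) :
    (DC v f).1 p = (1 / 2 : ℂ) * (fderiv ℝ f.1 p v.1 + Complex.I * fderiv ℝ f.1 p v.2) := rfl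

theorem DC_comm (u v : (Cn n × Cn n) × (Cn n × Cn n)) (f : SmAlg n) :
    DC u (DC v f) = DC v (DC u f) := by
  simp only [DC_eq, map_add, Derivation.map_smul]
  rw [Dir_comm u.1 v.1, Dir_comm u.1 v.2, Dir_comm u.2 v.1, Dir_comm u.2 v.2]
  module

/-- evaluation at 0 -/
def ev0 (n : ℕ) : SmAlg n →ₐ[ℂ] ℂ :=
  (Pi.evalAlgHom ℂ (fun _ : Cn n × Cn n => ℂ) 0).comp (SmAlg n).val

theorem ev0_apply (f : SmAlg n) : ev0 n f = f.1 0 := rfl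

def vz (j : Fin n) : (Cn n × Cn n) × (Cn n × Cn n) :=
  ((Pi.single j 1, 0), (-Pi.single j Complex.I, 0))
def vzb (j : Fin n) : (Cn n × Cn n) × (Cn n × Cn n) :=
  ((Pi.single j 1, 0), (Pi.single j Complex.I, 0))
def vw (j : Fin n) : (Cn n × Cn n) × (Cn n × Cn n) :=
  ((0, Pi.single j 1), (0, -Pi.single j Complex.I))
def vwb (j : Fin n) : (Cn n × Cn n) × (Cn n × Cn n) :=
  ((0, Pi.single j 1), (0, Pi.single j Complex.I))
def vq (j : Fin n) : (Cn n × Cn n) × (Cn n × Cn n) :=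
  ((Pi.single j 1, Pi.single j 1), (-Pi.single j Complex.I, -Pi.single j Complex.I))
def vqb (j : Fin n) : (Cn n × Cn n) × (Cn n × Cn n) :=
  ((Pi.single j 1, Pi.single j 1), (Pi.single j Complex.I, Pi.single j Complex.I))

theorem DC_vq (j : Fin n) (f : SmAlg n) : DC (vq j) f = DC (vz j) f + DC (vw j) f := by
  have h1 : (vq j).1 = (vz j).1 + (vw j).1 := by simp [vq, vz, vw]
  have h2 : (vq j).2 = (vz j).2 + (vw j).2 := by simp [vq, vz, vw]
  rw [DC_eq, h1, h2, Dir_add, Dir_add, DC_eq, DC_eq]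
  module

theorem DC_vqb (j : Fin n) (f : SmAlg n) : DC (vqb j) f = DC (vzb j) f + DC (vwb j) f := by
  have h1 : (vqb j).1 = (vzb j).1 + (vwb j).1 := by simp [vqb, vzb, vwb]
  have h2 : (vqb j).2 = (vzb j).2 + (vwb j).2 := by simp [vqb, vzb, vwb]
  rw [DC_eq, h1, h2, Dir_add, Dir_add, DC_eq, DC_eq]
  module

theorem fderiv_slice (f : SmAlg n) (z w v : Cn n) :
    fderiv ℝ (fun x => f.1 (x, w)) z v = fderiv ℝ f.1 (z, w) (v, 0) := by
  have h1 : HasFDerivAt (fun x : Cn n => (x, w)) (ContinuousLinearMap.inl ℝ (Cn n) (Cn n)) z :=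
    hasFDerivAt_prodMk_left z w
  have h2 := (Sm_diff f (z, w)).hasFDerivAt.comp z h1
  have h3 : fderiv ℝ (fun x => f.1 (x, w)) z = _ := h2.fderiv
  rw [h3]
  simp

theorem wd_slice (f : SmAlg n) (w : Cn n) (j : Fin n) :
    wd j (fun x => f.1 (x, w)) = fun x => (DC (vz j) f).1 (x, w) := by
  funext z
  rw [DC_apply]
  simp only [wd, fderiv_slice, vz]
  have : ((-Pi.single j Complex.I, 0) : Cn n × Cn n) = -((Pi.single j Complex.I, 0) : Cn n × Cn n) := by
    simp
  rw [this, map_neg]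
  ring

theorem wdb_slice (f : SmAlg n) (w : Cn n) (j : Fin n) :
    wdb j (fun x => f.1 (x, w)) = fun x => (DC (vzb j) f).1 (x, w) := by
  funext z
  rw [DC_apply]
  simp only [wdb, fderiv_slice, vzb]

/-- flat at zero -/
def Flat (f : SmAlg n) : Prop := ∀ m : ℕ, iteratedFDeriv ℝ m f.1 0 = 0

theorem Flat.dir {f : SmAlg n} (hf : Flat f) (v) : Flat (Dir v f) := by
  intro m
  have h1 : iteratedFDeriv ℝ m (fderiv ℝ f.1) 0 = 0 := by
    rw [← norm_eq_zero, norm_iteratedFDeriv_fderiv, hf (m + 1), norm_zero]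
  have h2 : (Dir v f).1 = (ContinuousLinearMap.apply ℝ ℂ v) ∘ (fderiv ℝ f.1) := rfl
  rw [h2, ContinuousLinearMap.iteratedFDeriv_comp_left (i := m) (n := (⊤ : ℕ∞)) _
    ((Sm_smooth f).fderiv_right (m := (⊤ : ℕ∞)) (by simp)).contDiffAt (by exact_mod_cast le_top), h1]
  ext; simp

theorem Flat.ev {f : SmAlg n} (hf : Flat f) : ev0 n f = 0 := by
  have := congrArg (fun T => T (fun _ => 0)) (hf 0)
  rw [ev0_apply]; simpa using this

theorem Flat.dc {f : SmAlg n} (hf : Flat f) (v) : Flat (DC v f) := by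
  intro m
  have h1 := hf.dir v.1 m
  have h2 := hf.dir v.2 m
  have e : (DC v f).1 = (1 / 2 : ℂ) • ((Dir v.1 f).1 + Complex.I • (Dir v.2 f).1) := rfl
  have s1 : ContDiff ℝ m (Dir v.1 f).1 := (Sm_smooth (Dir v.1 f)).of_le (by exact_mod_cast le_top)
  have s2 : ContDiff ℝ m (Dir v.2 f).1 := (Sm_smooth (Dir v.2 f)).of_le (by exact_mod_cast le_top)
  have s3 : ContDiff ℝ m (Complex.I • (Dir v.2 f).1) :=
    (s2.const_smul Complex.I : ContDiff ℝ m fun y => Complex.I • (Dir v.2 f).1 y)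
  have s4 : ContDiff ℝ m ((Dir v.1 f).1 + Complex.I • (Dir v.2 f).1) := s1.add s3
  rw [e, iteratedFDeriv_const_smul_apply s4.contDiffAt,
    iteratedFDeriv_add_apply s1.contDiffAt s3.contDiffAt,
    iteratedFDeriv_const_smul_apply s2.contDiffAt, h1, h2]
  simp

/-- vanishing on the diagonal -/
def DiagZ (f : SmAlg n) : Prop := ∀ z, f.1 (z, z) = 0

theorem DiagZ.fd {f : SmAlg n} (hf : DiagZ f) (z v : Cn n) : fderiv ℝ f.1 (z, z) (v, v) = 0 := by
  have h1 : HasFDerivAt (fun x : Cn n => (x, x))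
      ((ContinuousLinearMap.id ℝ (Cn n)).prod (ContinuousLinearMap.id ℝ (Cn n))) z :=
    (hasFDerivAt_id z).prodMk (hasFDerivAt_id z)
  have h2 := HasFDerivAt.comp (f := fun x : Cn n => (x, x)) z (Sm_diff f (z, z)).hasFDerivAt h1
  have h3 : (f.1 ∘ fun x : Cn n => (x, x)) = fun _ => 0 := funext hf
  rw [h3] at h2
  have h4 := h2.unique (hasFDerivAt_const 0 z)
  have := congrArg (fun T => T v) h4
  simpa using this

theorem DiagZ.vq {f : SmAlg n} (hf : DiagZ f) (j) : DiagZ (DC (vq j) f) := by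
  intro z
  rw [DC_apply]
  simp only [_root_.vq, hf.fd]
  simp

theorem DiagZ.vqb {f : SmAlg n} (hf : DiagZ f) (j) : DiagZ (DC (vqb j) f) := by
  intro z
  rw [DC_apply]
  simp only [_root_.vqb, hf.fd]
  simp

theorem DiagZ.ev {f : SmAlg n} (hf : DiagZ f) : ev0 n f = 0 := hf 0

/-- conjugation twisted by a linear map -/
def conjTw (g : Cn n × Cn n →L[ℝ] Cn n × Cn n) (f : SmAlg n) : SmAlg n :=
  ⟨fun p => (starRingEnd ℂ) (f.1 (g p)), by
    have := (Sm_smooth f)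
    exact (Complex.conjCLE.contDiff).comp (this.comp g.contDiff)⟩

theorem fderiv_conjTw (g : Cn n × Cn n →L[ℝ] Cn n × Cn n) (f : SmAlg n) (p v) :
    fderiv ℝ (conjTw g f).1 p v = (starRingEnd ℂ) (fderiv ℝ f.1 (g p) (g v)) := by
  have h2 := (Sm_diff f (g p)).hasFDerivAt.comp p g.hasFDerivAt
  have h3 : HasFDerivAt (conjTw g f).1 _ p :=
    ((Complex.conjCLE : ℂ →L[ℝ] ℂ).hasFDerivAt).comp p h2
  rw [h3.fderiv]
  simp

theorem DC_conjTw (g : Cn n × Cn n →L[ℝ] Cn n × Cn n) (f : SmAlg n) (u v)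
    (h1 : g u.1 = v.1) (h2 : g u.2 = - v.2) :
    DC u (conjTw g f) = conjTw g (DC v f) := by
  ext p
  rw [DC_apply, fderiv_conjTw, fderiv_conjTw, h1, h2]
  change _ = (starRingEnd ℂ) ((DC v f).1 (g p))
  rw [DC_apply]
  simp [map_ofNat]

theorem ev_conjTw (g : Cn n × Cn n →L[ℝ] Cn n × Cn n) (f : SmAlg n) :
    ev0 n (conjTw g f) = (starRingEnd ℂ) (ev0 n f) := by
  change (starRingEnd ℂ) (f.1 (g 0)) = _
  rw [map_zero]; rfl

/-- one variable: `O(x^3)` forces the second derivative to vanish -/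
theorem second_deriv_zero (g : ℝ → ℂ) (hg : ContDiff ℝ 2 g)
    (hO : g =O[nhds 0] fun x : ℝ => x ^ 3) : iteratedDeriv 2 g 0 = 0 := by
  have h1 := taylor_isLittleO_univ (x₀ := 0) (n := 2) hg
  have h32 : (fun x : ℝ => x ^ 3) =o[nhds 0] fun x : ℝ => x ^ 2 := by
    simpa using isLittleO_pow_pow (𝕜 := ℝ) (m := 2) (n := 3) (by norm_num)
  have h2 := (hO.trans_isLittleO h32)
  simp only [sub_zero] at h1
  have h3 := h2.sub h1
  simp only [sub_sub_cancel, taylor_within_apply, sub_zero, iteratedDerivWithin_univ,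
    Finset.sum_range_succ, Finset.sum_range_zero, zero_add] at h3
  have hg0 : g 0 = 0 := by
    have := hO.eq_zero_imp.self_of_nhds
    exact this (by simp)
  have h4 := h3.comp_tendsto (k := fun x : ℝ => -x) (l' := nhds 0) (by
    have : Continuous fun x : ℝ => -x := by fun_prop
    simpa using this.tendsto 0)
  have h4' : ((fun x : ℝ => x ^ 2) ∘ fun x : ℝ => -x) = fun x : ℝ => x ^ 2 := by
    funext x; simp
  rw [h4'] at h4
  have h5 := h3.add h4
  have h6 : (fun x : ℝ => (x ^ 2) • iteratedDeriv 2 g 0) =o[nhds 0] fun x : ℝ => x ^ 2 := by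
    refine h5.congr_left ?_
    intro x
    simp [hg0, iteratedDeriv_zero]
    ring
  by_contra hne
  have h7 : (fun x : ℝ => x ^ 2) =O[nhds 0] fun x : ℝ => (x ^ 2) • iteratedDeriv 2 g 0 := by
    refine IsBigO.of_bound (‖iteratedDeriv 2 g 0‖⁻¹) (Filter.Eventually.of_forall fun x => ?_)
    rw [norm_smul]
    have := norm_pos_iff.2 hne
    apply le_of_eq
    field_simp
  have h8 := h7.trans_isLittleO h6
  have h9 : (fun x : ℝ => x ^ 2) =o[nhdsWithin 0 {0}ᶜ] fun x : ℝ => x ^ 2 := h8.mono nhdsWithin_le_nhds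
  refine isLittleO_irrefl ?_ h9
  apply Filter.Eventually.frequently
  filter_upwards [self_mem_nhdsWithin] with x hx
  have : x ≠ 0 := hx
  simpa using this

theorem dir_dir_zero_self (r : SmAlg n)
    (hr : (fun z : Cn n => r.1 (z, 0)) =O[nhds 0] fun z => ‖z‖ ^ 3) (v : Cn n) :
    ev0 n (Dir (v, 0) (Dir (v, 0) r)) = 0 := by
  have hd : ∀ (f : SmAlg n) (x : ℝ),
      HasDerivAt (fun x : ℝ => f.1 (x • (v, 0))) ((Dir (v, 0) f).1 (x • (v, 0))) x := by
    intro f x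
    have h1 : HasDerivAt (fun x : ℝ => x • ((v, 0) : Cn n × Cn n)) (v, 0) x := by
      simpa using (hasDerivAt_id x).smul_const ((v, 0) : Cn n × Cn n)
    exact (Sm_diff f (x • (v, 0))).hasFDerivAt.comp_hasDerivAt x h1
  have hO : (fun x : ℝ => r.1 (x • (v, 0))) =O[nhds 0] fun x : ℝ => x ^ 3 := by
    have ht : Filter.Tendsto (fun x : ℝ => x • v) (nhds 0) (nhds 0) := by
      have : Continuous fun x : ℝ => x • v := by fun_prop
      simpa using this.tendsto 0
    have h1 := hr.comp_tendsto ht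
    have h2 : ((fun z : Cn n => r.1 (z, 0)) ∘ fun x : ℝ => x • v)
      = fun x : ℝ => r.1 (x • (v, 0)) := by
      funext x; simp
    rw [h2] at h1
    refine h1.trans (IsBigO.of_bound (‖v‖ ^ 3) (Filter.Eventually.of_forall fun x => ?_))
    simp [norm_smul, mul_pow, mul_comm]
  have hs : ContDiff ℝ 2 (fun x : ℝ => r.1 (x • (v, 0))) := by
    have : ContDiff ℝ 2 r.1 := (Sm_smooth r).of_le two_le_sm
    exact this.comp (contDiff_id.smul contDiff_const)
  have := second_deriv_zero _ hs hO
  rw [iteratedDeriv_succ, iteratedDeriv_one] at this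
  rw [funext fun x => (hd r x).deriv, (hd _ 0).deriv] at this
  simpa [ev0_apply] using this

theorem dir_dir_zero (r : SmAlg n)
    (hr : (fun z : Cn n => r.1 (z, 0)) =O[nhds 0] fun z => ‖z‖ ^ 3) (u v : Cn n) :
    ev0 n (Dir (u, 0) (Dir (v, 0) r)) = 0 := by
  have h1 := dir_dir_zero_self r hr (u + v)
  have e : ((u + v, 0) : Cn n × Cn n) = (u, 0) + (v, 0) := by simp
  rw [e] at h1
  simp only [Dir_add, map_add, dir_dir_zero_self r hr] at h1
  rw [Dir_comm (v, 0) (u, 0)] at h1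
  linear_combination h1 / 2

/-- coordinates -/
def cx (j : Fin n) : SmAlg n := ⟨fun p => p.1 j, by
  have : ContDiff ℝ (⊤ : ℕ∞) (fun p : Cn n × Cn n => p.1 j) := by fun_prop
  exact this⟩
def cxb (j : Fin n) : SmAlg n := ⟨fun p => (starRingEnd ℂ) (p.1 j), by
  have : ContDiff ℝ (⊤ : ℕ∞) (fun p : Cn n × Cn n => p.1 j) := by fun_prop
  exact Complex.conjCLE.contDiff.comp this⟩

theorem fderiv_cx (j : Fin n) (p v : Cn n × Cn n) : fderiv ℝ (cx j).1 p v = v.1 j := by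
  have : (cx j).1 = ((ContinuousLinearMap.proj (R := ℝ) (φ := fun _ : Fin n => ℂ) j).comp
    (ContinuousLinearMap.fst ℝ (Cn n) (Cn n))) := rfl
  rw [this, ContinuousLinearMap.fderiv]
  rfl

theorem fderiv_cxb (j : Fin n) (p v : Cn n × Cn n) :
    fderiv ℝ (cxb j).1 p v = (starRingEnd ℂ) (v.1 j) := by
  have : (cxb j).1 = ((Complex.conjCLE : ℂ →L[ℝ] ℂ).comp
    ((ContinuousLinearMap.proj (R := ℝ) (φ := fun _ : Fin n => ℂ) j).comp
    (ContinuousLinearMap.fst ℝ (Cn n) (Cn n)))) := rfl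
  rw [this, ContinuousLinearMap.fderiv]
  rfl

theorem dz_cx (s j : Fin n) : DC (vz s) (cx j) = if j = s then 1 else 0 := by
  ext p
  rw [DC_apply, fderiv_cx, fderiv_cx]
  by_cases h : j = s
  · subst h; simp [vz]; norm_num
  · simp [vz, h]
theorem dzb_cx (s j : Fin n) : DC (vzb s) (cx j) = 0 := by
  ext p
  rw [DC_apply, fderiv_cx, fderiv_cx]
  by_cases h : j = s
  · subst h; simp [vzb]
  · simp [vzb, h]
theorem dz_cxb (s j : Fin n) : DC (vz s) (cxb j) = 0 := by
  ext p
  rw [DC_apply, fderiv_cxb, fderiv_cxb]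
  by_cases h : j = s
  · subst h; simp [vz]
  · simp [vz, h]
theorem dzb_cxb (s j : Fin n) : DC (vzb s) (cxb j) = if j = s then 1 else 0 := by
  ext p
  rw [DC_apply, fderiv_cxb, fderiv_cxb]
  by_cases h : j = s
  · subst h; simp [vzb]; norm_num
  · simp [vzb, h]

theorem quad_data (f : SmAlg n) (c : Fin n → ℝ)
    (hf : (fun z : Cn n => f.1 (z, 0) - ∑ j, ((c j * Complex.normSq (z j) : ℝ) : ℂ))
      =O[nhds 0] fun z => ‖z‖ ^ 3) (s t : Fin n) :
    ev0 n (DC (vz s) (DC (vzb t) f)) = (if t = s then (c s : ℂ) else 0) ∧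
    ev0 n (DC (vz s) (DC (vz t) f)) = 0 ∧ ev0 n (DC (vzb s) (DC (vzb t) f)) = 0 := by
  obtain ⟨r, hr⟩ : ∃ r : SmAlg n, r = f - ∑ j, (c j : ℂ) • (cx j * cxb j) := ⟨_, rfl⟩
  have hrO : (fun z : Cn n => r.1 (z, 0)) =O[nhds 0] fun z => ‖z‖ ^ 3 := by
    refine hf.congr_left ?_
    intro z
    rw [hr]
    have : (f - ∑ j, (c j : ℂ) • (cx j * cxb j) : SmAlg n).1
       = f.1 - ∑ j, (c j : ℂ) • ((cx j).1 * (cxb j).1) := by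
      simp
    rw [this]
    simp [cx, cxb, Complex.mul_conj]
  have hf' : f = r + ∑ j, (c j : ℂ) • (cx j * cxb j) := by rw [hr]; ring
  have z0 : ∀ a b : Cn n × Cn n, a.2 = 0 → b.2 = 0 → ev0 n (Dir a (Dir b r)) = 0 := by
    rintro ⟨a, a'⟩ ⟨b, b'⟩ ha hb
    simp only at ha hb
    subst ha hb
    exact dir_dir_zero r hrO a b
  have z1 : ∀ a b : (Cn n × Cn n) × (Cn n × Cn n), a.1.2 = 0 → a.2.2 = 0 → b.1.2 = 0 → b.2.2 = 0 →
      ev0 n (DC a (DC b r)) = 0 := by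
    intro a b h1 h2 h3 h4
    simp only [DC_eq, map_add, Derivation.map_smul, map_smul, z0 _ _ h1 h3, z0 _ _ h1 h4,
      z0 _ _ h2 h3, z0 _ _ h2 h4]
    simp
  have d1 : DC (vzb t) (∑ j, (c j : ℂ) • (cx j * cxb j)) = (c t : ℂ) • cx t := by
    simp [map_sum, Derivation.leibniz, dzb_cx, dzb_cxb]
  have d2 : DC (vz t) (∑ j, (c j : ℂ) • (cx j * cxb j)) = (c t : ℂ) • cxb t := by
    simp [map_sum, Derivation.leibniz, dz_cx, dz_cxb]
  refine ⟨?_, ?_, ?_⟩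
  · rw [hf', map_add, map_add, map_add, z1 _ _ rfl rfl rfl rfl, d1, Derivation.map_smul, dz_cx]
    by_cases h : t = s
    · subst h; rw [if_pos rfl, if_pos rfl, zero_add, map_smul, map_one]; simp
    · simp [h]
  · rw [hf', map_add, map_add, map_add, z1 _ _ rfl rfl rfl rfl, d2, Derivation.map_smul, dz_cxb]
    simp
  · rw [hf', map_add, map_add, map_add, z1 _ _ rfl rfl rfl rfl, d1, Derivation.map_smul, dzb_cx]
    simp

end concretePart

/-- the mixed fourth derivative `∂⁴ψ/∂z̄_j∂z_j∂z̄_k∂z_k(0,0)`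
(derivatives in the `z`-variables, `w` held fixed at `0`) for `1 ≤ j,k ≤ q`. -/
theorem statement9 (n q : ℕ) (hn : 1 ≤ n) (hq : q ≤ n) (lam : Fin n → ℝ)
    (hneg : ∀ j : Fin n, (j : ℕ) < q → lam j < 0)
    (hpos : ∀ j : Fin n, q ≤ (j : ℕ) → 0 < lam j)
    (φ : Cn n → ℝ) (hφ : PhiOK lam φ)
    (ψ : Cn n → Cn n → ℂ) (hψ : Admissible lam φ ψ)
    (j k : Fin n) (hj : (j : ℕ) < q) (hk : (k : ℕ) < q) :
    wdb j (wd j (wdb k (wd k (fun z => ψ z 0)))) 0 =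
      (∑ t : Fin n, if q ≤ (t : ℕ) then
        ((2 / (|lam t| + |lam j| + |lam k|) ^ 2 *
            (|lam t| + |lam j| + |lam k|
              - |lam j| * |lam k| / (|lam k| + |lam t|)
              - |lam j| * |lam k| / (|lam j| + |lam t|)) : ℝ) : ℂ) * Complex.I *
          (Complex.normSq (wdb t (wd j (wd k (cplx φ))) 0) : ℂ)
      else 0)
      - Complex.I * wdb j (wd j (wdb k (wd k (cplx φ)))) 0 := by
  obtain ⟨hφs, hφO⟩ := hφ
  obtain ⟨hs, ha1, ha2, -, hc1, hc2, -, -, hd, he⟩ := hψ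
  have hΦs : ContDiff ℝ (⊤ : ℕ∞) (fun p : Cn n × Cn n => ((φ p.1 : ℝ) : ℂ)) :=
    Complex.ofRealCLM.contDiff.comp (hφs.comp contDiff_fst)
  obtain ⟨Ψ, hΨ⟩ : ∃ Ψ : SmAlg n, ∀ x w, Ψ.1 (x, w) = ψ x w := ⟨⟨_, hs⟩, fun _ _ => rfl⟩
  obtain ⟨Φ, hΦ⟩ : ∃ Φ : SmAlg n, ∀ x w, Φ.1 (x, w) = ((φ x : ℝ) : ℂ) :=
    ⟨⟨_, hΦs⟩, fun _ _ => rfl⟩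
  have eΨ : ∀ w, (fun x => ψ x w) = fun x => Ψ.1 (x, w) := fun w => funext fun x => (hΨ x w).symm
  have eΦ : ∀ w, cplx φ = fun x => Φ.1 (x, w) := fun w => funext fun x => (hΦ x w).symm
  obtain ⟨h, hh⟩ : ∃ h : SmAlg n, h = Complex.I • Ψ := ⟨_, rfl⟩
  have hhv : ∀ x w, h.1 (x, w) = Complex.I * ψ x w := by
    intro x w; rw [hh, ← hΨ]; rfl
  obtain ⟨A, hA⟩ : ∃ A : Fin n → SmAlg n, ∀ t, A t = DC (vzb t) (h + Φ) := ⟨_, fun _ => rfl⟩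
  obtain ⟨B, hB⟩ : ∃ B : Fin n → SmAlg n, ∀ t, B t = DC (vz t) (Φ - h) := ⟨_, fun _ => rfl⟩
  have hAv : ∀ t z w, (A t).1 (z, w) =
      Complex.I * wdb t (fun x => ψ x w) z + wdb t (cplx φ) z := by
    intro t z w
    rw [eΨ, eΦ w, wdb_slice, wdb_slice, hA, hh, map_add, Derivation.map_smul]
    rfl
  have hBv : ∀ t z w, (B t).1 (z, w) =
      - Complex.I * wd t (fun x => ψ x w) z + wd t (cplx φ) z := by
    intro t z w
    rw [eΨ, eΦ w, wd_slice, wd_slice, hB, hh, map_sub, Derivation.map_smul]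
    change _ - Complex.I * _ = _
    ring
  have dA : ∀ t, DiagZ (A t) := by
    intro t z
    rw [hAv, hc1]
    linear_combination wdb t (cplx φ) z * Complex.I_mul_I
  have dB : ∀ t, DiagZ (B t) := by
    intro t z
    rw [hBv, hc2]
    linear_combination wd t (cplx φ) z * Complex.I_mul_I
  have dh : DiagZ h := by
    intro z
    rw [hhv, ha1, mul_zero]
  have fE : Flat (∑ t, A t * B t) := by
    intro m
    have e : (∑ t, A t * B t : SmAlg n).1 = (fun p : Cn n × Cn n =>
        ∑ j, (Complex.I * wdb j (fun x => ψ x p.2) p.1 + wdb j (cplx φ) p.1) *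
             (- Complex.I * wd j (fun x => ψ x p.2) p.1 + wd j (cplx φ) p.1)) := by
      have : (∑ t, A t * B t : SmAlg n).1 = ∑ t, (A t).1 * (B t).1 := by simp
      rw [this]
      funext p
      obtain ⟨z, w⟩ := p
      simp only [Finset.sum_apply, Pi.mul_apply, hAv, hBv]
    rw [e]
    exact hd m 0
  have hO1 : (fun z : Cn n => h.1 (z, 0) - ∑ j, ((-|lam j| * Complex.normSq (z j) : ℝ) : ℂ))
      =O[nhds 0] fun z => ‖z‖ ^ 3 := by
    have ht : Filter.Tendsto (fun z : Cn n => ((z, 0) : Cn n × Cn n)) (nhds 0) (nhds 0) := by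
      have : Continuous fun z : Cn n => ((z, 0) : Cn n × Cn n) := by fun_prop
      exact this.tendsto 0
    have h1 := (he.comp_tendsto ht).const_mul_left Complex.I
    refine (h1.congr_left ?_).congr_right ?_
    · intro z
      simp only [Function.comp, hhv, Pi.zero_apply, sub_zero, map_zero, mul_zero, zero_mul,
        Finset.sum_const_zero, add_zero]
      push_cast
      simp only [neg_mul, Finset.sum_neg_distrib]
      linear_combination (-∑ j, ((|lam j| : ℝ) : ℂ) * (Complex.normSq (z j) : ℂ)) * Complex.I_mul_I
    · intro z
      simp [Prod.norm_def]
  have hO2 : (fun z : Cn n => Φ.1 (z, 0) - ∑ j, ((lam j * Complex.normSq (z j) : ℝ) : ℂ))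
      =O[nhds 0] fun z => ‖z‖ ^ 3 := by
    refine IsBigO.congr_left (Complex.isBigO_ofReal_left.2 hφO) ?_
    intro z
    rw [hΦ]
    push_cast; rfl
  have q1 := quad_data h _ hO1
  have q2 := quad_data Φ _ hO2
  have hP : ∀ v, (∀ p, fderiv ℝ Φ.1 p v.1 = 0) → (∀ p, fderiv ℝ Φ.1 p v.2 = 0) → DC v Φ = 0 := by
    intro v h1 h2
    ext p
    rw [DC_apply, h1, h2]; simp
  have hPw : ∀ (p : Cn n × Cn n) (u : Cn n), fderiv ℝ Φ.1 p (0, u) = 0 := by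
    intro p u
    have e : Φ.1 = (fun x => Φ.1 (x, 0)) ∘ Prod.fst := by
      funext p; obtain ⟨x, w⟩ := p
      simp [hΦ]
    have hdx : DifferentiableAt ℝ (fun x => Φ.1 (x, 0)) p.1 := by
      have h1 : HasFDerivAt (fun x : Cn n => (x, (0 : Cn n)))
        (ContinuousLinearMap.inl ℝ (Cn n) (Cn n)) p.1 := hasFDerivAt_prodMk_left p.1 0
      exact ((Sm_diff Φ (p.1, 0)).hasFDerivAt.comp p.1 h1).differentiableAt
    rw [e, fderiv_comp p hdx differentiableAt_fst]
    simp [fderiv_fst]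
  have main := abstract_main DC (ev0 n) A B h Φ DC_comm (fun t => (dA t).ev) (fun t => (dB t).ev)
    vz vzb vw vwb vq vqb hA hB q lam hneg hpos
    (fun v1 v2 v3 => (((fE.dc v3).dc v2).dc v1).ev)
    (fun v1 v2 v3 v4 => ((((fE.dc v4).dc v3).dc v2).dc v1).ev)
    (by
      intro s t
      rw [hA, map_add, map_add, map_add, (q1 s t).1, (q2 s t).1]
      split_ifs
      · push_cast; ring
      · simp)
    (by
      intro s t
      rw [hB, map_sub, map_sub, map_sub, (q1 s t).2.1, (q2 s t).2.1, sub_zero])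
    (by
      intro s t
      rw [hA, map_add, map_add, map_add, (q1 s t).2.2, (q2 s t).2.2, add_zero])
    (by
      intro s t
      rw [hB, map_sub, map_sub, map_sub, DC_comm, DC_comm (vzb s), (q1 t s).1, (q2 t s).1]
      by_cases hst : t = s
      · subst hst; simp
      · rw [if_neg hst, if_neg (Ne.symm hst), if_neg (Ne.symm hst), sub_zero])
    (fun s t => ((dA t).vq s).ev) (fun s t => ((dB t).vq s).ev)
    (fun s t => ((dA t).vqb s).ev) (fun s t => ((dB t).vqb s).ev)
    DC_vq DC_vqb
    (fun s => hP _ (fun p => hPw p _) (fun p => hPw p _))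
    (fun s => hP _ (fun p => hPw p _) (fun p => hPw p _))
    j k hj hk
    (fun t => (((dh.vq k).vq j).vqb t).ev)
    (by
      intro t
      obtain ⟨g, hg⟩ : ∃ g : Cn n × Cn n →L[ℝ] Cn n × Cn n, ∀ p, g p = (p.2, p.1) :=
        ⟨(ContinuousLinearEquiv.prodComm ℝ (Cn n) (Cn n) : Cn n × Cn n →L[ℝ] Cn n × Cn n),
          fun _ => rfl⟩
      have e : h = conjTw g h := by
        ext p; obtain ⟨x, w⟩ := p
        change _ = (starRingEnd ℂ) (h.1 (g (x, w)))
        rw [hg, hhv, hhv, ha2]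
        simp
      have hw : ∀ s f, DC (vw s) (conjTw g f) = conjTw g (DC (vzb s) f) := fun s f =>
        DC_conjTw g f _ _ (by simp [hg, vw, vzb]) (by simp [hg, vw, vzb])
      have hwb : ∀ s f, DC (vwb s) (conjTw g f) = conjTw g (DC (vz s) f) := fun s f =>
        DC_conjTw g f _ _ (by simp [hg, vwb, vz]) (by simp [hg, vwb, vz])
      conv_lhs => rw [e]
      rw [hw, hw, hwb, ev_conjTw])
    (by
      intro t
      obtain ⟨g, hg⟩ : ∃ g : Cn n × Cn n →L[ℝ] Cn n × Cn n, ∀ p, g p = p :=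
        ⟨ContinuousLinearMap.id ℝ _, fun _ => rfl⟩
      have e : Φ = conjTw g Φ := by
        ext p; obtain ⟨x, w⟩ := p
        change _ = (starRingEnd ℂ) (Φ.1 (g (x, w)))
        rw [hg, hΦ]
        simp
      have hw : ∀ s f, DC (vz s) (conjTw g f) = conjTw g (DC (vzb s) f) := fun s f =>
        DC_conjTw g f _ _ (by simp [hg, vz, vzb]) (by simp [hg, vz, vzb])
      have hwb : ∀ s f, DC (vzb s) (conjTw g f) = conjTw g (DC (vz s) f) := fun s f =>
        DC_conjTw g f _ _ (by simp [hg, vzb, vz]) (by simp [hg, vzb, vz])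
      conv_lhs => rw [e]
      rw [hwb, hwb, hw, ev_conjTw])
  have L1 : wdb j (wd j (wdb k (wd k (fun z => ψ z 0)))) 0 =
      ev0 n (DC (vzb j) (DC (vz j) (DC (vzb k) (DC (vz k) Ψ)))) := by
    rw [eΨ, wd_slice, wdb_slice, wd_slice, wdb_slice]; rfl
  have L2 : wdb j (wd j (wdb k (wd k (cplx φ)))) 0 =
      ev0 n (DC (vzb j) (DC (vz j) (DC (vzb k) (DC (vz k) Φ)))) := by
    rw [eΦ 0, wd_slice, wdb_slice, wd_slice, wdb_slice]; rfl
  have L3 : ∀ t, wdb t (wd j (wd k (cplx φ))) 0 =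
      ev0 n (DC (vzb t) (DC (vz j) (DC (vz k) Φ))) := by
    intro t
    rw [eΦ 0, wd_slice, wd_slice, wdb_slice]; rfl
  have L4 : ev0 n (DC (vzb j) (DC (vz j) (DC (vzb k) (DC (vz k) h)))) =
      Complex.I * ev0 n (DC (vzb j) (DC (vz j) (DC (vzb k) (DC (vz k) Ψ)))) := by
    rw [hh]
    simp only [Derivation.map_smul, map_smul, smul_eq_mul]
  rw [L4] at main
  rw [L1, L2]
  simp only [L3]
  have hsum : ∀ (a b : Fin n → ℂ), (∑ t : Fin n, if q ≤ (t : ℕ) then a t * Complex.I * b t else 0)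
      = Complex.I * ∑ t : Fin n, if q ≤ (t : ℕ) then a t * b t else 0 := by
    intro a b
    rw [Finset.mul_sum]
    refine Finset.sum_congr rfl fun t _ => ?_
    split_ifs <;> ring
  rw [hsum]
  linear_combination (-Complex.I) * main +
    ev0 n (DC (vzb j) (DC (vz j) (DC (vzb k) (DC (vz k) Ψ)))) * Complex.I_mul_I
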